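/- arXiv:2211.12245 — 3 statements merged into one kernel-verified Lean document; each statement's English description precedes it below -/
import Mathlib

section
/- Let M ∈ GL₂(ℤ) (a 2×2 integer matrix with determinant ±1) have a real eigenvalue α with α ≠ 1 and α ≠ -1. Let Γ be the centralizer of M in GL₂(ℤ), i.e., the subgroup of all N ∈ GL₂(ℤ) with MN = NM (under these hypotheses M has two distinct eigenvalues α and det(M)/α, and an integer matrix N is simultaneously diagonalizable with M over ℂ if and only if it commutes with M). Then Γ is isomorphic, as a group, to U × ℤ for some finite group U. -/
/-!
An eigenvalue `α ≠ ±1` is irrational: a rational one would be an integer dividing `det M = ±1`.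
Every `N ∈ Γ` is a rational linear combination of `1` and `M`, so an eigenvector `v` of `M` for `α`
is an eigenvector of `N`, and `N v = χ(N) v` defines a homomorphism `χ : Γ → ℝˣ`. The coordinates
of `v` are linearly independent over `ℤ`, so `χ` is injective and `Γ` is commutative. Since `χ(N)`
is a root of the characteristic polynomial of `N`, whose integer coefficients `tr N` and
`det N = ±1` are bounded in terms of `|χ(N)|`, only finitely many `N` satisfy `1 ≤ |χ(N)| ≤ B`.
Thus `|χ|` has finite kernel and infinite cyclic image, generated by its least value above `1`,
and `Γ` splits as the product of the two.
-/

open Matrix Polynomial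
open scoped NNReal

universe u

section Splitting

theorem nonempty_mulEquiv_ker_prod_int {G H : Type*} [CommGroup G] [Group H] (f : G →* H) {g : G}
    (hg : ¬IsOfFinOrder (f g)) (hrange : f.range ≤ Subgroup.zpowers (f g)) :
    Nonempty (G ≃* f.ker × Multiplicative ℤ) := by
  let Φ : f.ker × Multiplicative ℤ →* G := f.ker.subtype.coprod (zpowersHom G g)
  have Φ_apply (p : f.ker × Multiplicative ℤ) : Φ p = p.1 * g ^ p.2.toAdd := rfl
  have Φ_injective : Function.Injective Φ := by
    refine (injective_iff_map_eq_one Φ).2 fun ⟨u, n⟩ h ↦ ?_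
    rw [Φ_apply] at h
    have hpow : f g ^ n.toAdd = 1 := by
      simpa [f.mem_ker.1 u.2] using congrArg f h
    have hn : n.toAdd = 0 := injective_zpow_iff_not_isOfFinOrder.2 hg (by simpa using hpow)
    have hu : (u : G) = 1 := by simpa [hn] using h
    exact Prod.ext (Subtype.ext hu) hn
  have Φ_surjective : Function.Surjective Φ := fun x ↦ by
    obtain ⟨n, hn⟩ := Subgroup.mem_zpowers_iff.1 (hrange ⟨x, rfl⟩)
    refine ⟨(⟨x * (g ^ n)⁻¹, ?_⟩, Multiplicative.ofAdd n), by simp [Φ_apply]⟩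
    rw [f.mem_ker, map_mul, map_inv, map_zpow, hn, mul_inv_cancel]
  exact ⟨(MulEquiv.ofBijective Φ ⟨Φ_injective, Φ_surjective⟩).symm⟩

theorem exists_range_eq_zpowers_of_finite_preimage_Icc {G H : Type*} [Group G] [CommGroup H]
    [LinearOrder H] [IsOrderedMonoid H] [MulArchimedean H] {f : G →* H}
    (hfin : ∀ c, (f ⁻¹' Set.Icc 1 c).Finite) (hf : f ≠ 1) :
    ∃ g, 1 < f g ∧ f.range = Subgroup.zpowers (f g) := by
  obtain ⟨g₀, hg₀⟩ : ∃ g, 1 < f g := by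
    obtain ⟨g, hg⟩ := DFunLike.ne_iff.1 hf
    rcases lt_or_gt_of_ne hg with hlt | hgt
    · exact ⟨g⁻¹, by rwa [map_inv, Left.one_lt_inv_iff]⟩
    · exact ⟨g, hgt⟩
  obtain ⟨g, ⟨hg, hgg₀⟩, hmin⟩ : ∃ g ∈ f ⁻¹' Set.Ioc 1 (f g₀), ∀ h ∈ f ⁻¹' Set.Ioc 1 (f g₀),
      f g ≤ f h :=
    Set.exists_min_image _ f ((hfin (f g₀)).subset (Set.preimage_mono Set.Ioc_subset_Icc_self))
      ⟨g₀, hg₀, le_rfl⟩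
  have hleast : IsLeast {x | x ∈ f.range ∧ 1 < x} (f g) := by
    refine ⟨⟨⟨g, rfl⟩, hg⟩, ?_⟩
    rintro _ ⟨⟨h, rfl⟩, hh⟩
    rcases le_total (f h) (f g₀) with hle | hge
    · exact hmin h ⟨hh, hle⟩
    · exact hgg₀.trans hge
  exact ⟨g, hg, by rw [Subgroup.cyclic_of_min hleast, Subgroup.zpowers_eq_closure]⟩

theorem exists_finite_mulEquiv_prod_int_of_injective_units {G : Type u} {K : Type*} [Group G]
    [NormedField K] {χ : G →* Kˣ} (hχ : Function.Injective χ)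
    (hfin : ∀ B : ℝ, {g | ‖(χ g : K)‖ ∈ Set.Icc 1 B}.Finite)
    (hne : ∃ g, ‖(χ g : K)‖ ≠ 1) :
    ∃ (U : Type u) (_ : Group U) (_ : Finite U), Nonempty (G ≃* U × Multiplicative ℤ) := by
  let _ : CommGroup G :=
    { ‹Group G› with mul_comm := fun a b ↦ hχ (by rw [map_mul, map_mul, mul_comm]) }
  let f : G →* ℝ≥0ˣ := (Units.map (nnnormHom : K →*₀ ℝ≥0).toMonoidHom).comp χ
  have coe_f (g : G) : ((f g : ℝ≥0) : ℝ) = ‖(χ g : K)‖ := rfl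
  have hf : f ≠ 1 := by
    intro h
    obtain ⟨g, hg⟩ := hne
    exact hg (by simp [← coe_f, h])
  have finite_preimage (c : ℝ≥0ˣ) : (f ⁻¹' Set.Icc 1 c).Finite :=
    (hfin (c : ℝ≥0)).subset fun g ⟨h1, hc⟩ ↦ ⟨by exact_mod_cast h1, by exact_mod_cast hc⟩
  have finite_ker : Finite f.ker :=
    ((finite_preimage 1).subset fun g hg ↦ by simp [f.mem_ker.1 hg]).to_subtype
  obtain ⟨g, hg, hrange⟩ := exists_range_eq_zpowers_of_finite_preimage_Icc finite_preimage hf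
  have hfg : ¬IsOfFinOrder (f g) := by
    rw [isOfFinOrder_iff_eq_one]
    exact hg.ne'
  exact ⟨f.ker, inferInstance, finite_ker, nonempty_mulEquiv_ker_prod_int f hfg hrange.le⟩

end Splitting

section CommonEigenvector

variable {n R A : Type*} [Fintype n] [CommRing R] [CommRing A] [Algebra R A]

theorem map_mulVec_injective_of_linearIndependent {v : n → A} (hv : LinearIndependent R v) :
    Function.Injective fun N : Matrix n n R ↦ N.map (algebraMap R A) *ᵥ v := fun N N' h ↦
  funext fun i ↦ hv.fintypeLinearCombination_injective <| by
    simpa [Fintype.linearCombination_apply, mulVec, dotProduct, Algebra.smul_def]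
      using congrFun h i

variable [DecidableEq n] [IsDomain A]

theorem exists_hom_units_of_common_eigenvector {Γ : Subgroup (GL n R)} {v : n → A} (hv : v ≠ 0)
    (h : ∀ N ∈ Γ, ∃ x : A, (N : Matrix n n R).map (algebraMap R A) *ᵥ v = x • v) :
    ∃ χ : Γ →* Aˣ, ∀ N : Γ,
      ((N : GL n R) : Matrix n n R).map (algebraMap R A) *ᵥ v = (χ N : A) • v := by
  choose x hx using fun N : Γ ↦ h N N.2
  let χ : Γ →* A :=
    { toFun := x
      map_one' := smul_left_injective A hv <| by simp [← hx]
      map_mul' := fun N N' ↦ smul_left_injective A hv <| by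
        dsimp only
        rw [← hx, mul_comm, mul_smul, ← hx N, ← mulVec_smul, ← hx N', mulVec_mulVec,
          ← Matrix.map_mul, Subgroup.coe_mul, Units.val_mul] }
  exact ⟨χ.toHomUnits, hx⟩

theorem aeval_charpoly_eq_zero_of_mulVec_eq_smul {N : Matrix n n R} {v : n → A} {x : A}
    (hv : v ≠ 0) (h : N.map (algebraMap R A) *ᵥ v = x • v) : aeval x N.charpoly = 0 := by
  rw [aeval_def, ← eval_map, ← charpoly_map, eval_charpoly, ← exists_mulVec_eq_zero_iff]
  exact ⟨v, hv, by simp [sub_mulVec, h]⟩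

end CommonEigenvector

theorem irrational_of_aeval_eq_zero_of_isUnit_coeff_zero {p : ℤ[X]} (hp : p.Monic)
    (hunit : IsUnit (p.coeff 0)) {x : ℝ} (hx : aeval x p = 0) (h1 : x ≠ 1) (h2 : x ≠ -1) :
    Irrational x := by
  rintro ⟨q, rfl⟩
  have hq : aeval q p = 0 := (aeval_algebraMap_eq_zero_iff ℝ q p).1 hx
  obtain ⟨z, rfl, hz⟩ := exists_integer_of_is_root_of_monic hp hq
  rcases Int.isUnit_iff.1 (isUnit_of_dvd_unit hz hunit) with rfl | rfl
  · exact h1 (by simp)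
  · exact h2 (by simp)

theorem isUnit_coeff_zero_charpoly {n R : Type*} [Fintype n] [DecidableEq n] [CommRing R]
    (M : GL n R) : IsUnit ((M : Matrix n n R).charpoly.coeff 0) := by
  have h := isUnits_det_units M
  rw [det_eq_sign_charpoly_coeff] at h
  exact isUnit_of_mul_isUnit_right h

section FinTwo

theorem aeval_charpoly_fin_two {R A : Type*} [CommRing R] [Nontrivial R] [CommRing A] [Algebra R A]
    (M : Matrix (Fin 2) (Fin 2) R) (x : A) :
    aeval x M.charpoly = x ^ 2 - algebraMap R A M.trace * x + algebraMap R A M.det := by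
  simp [charpoly_fin_two]

theorem smul_eq_add_smul_one_of_commute {R : Type*} [CommRing R] {M N : Matrix (Fin 2) (Fin 2) R}
    (h : Commute M N) :
    M 1 0 • N = N 1 0 • M + (M 1 0 * N 1 1 - N 1 0 * M 1 1) • (1 : Matrix (Fin 2) (Fin 2) R) := by
  have h00 := congrFun₂ h.eq 0 0
  have h10 := congrFun₂ h.eq 1 0
  simp only [mul_apply, Fin.sum_univ_two] at h00 h10
  rw [← Matrix.ext_iff]
  simp only [Fin.forall_fin_two, Matrix.add_apply, Matrix.smul_apply, smul_eq_mul, one_apply_eq,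
    one_apply_ne zero_ne_one, one_apply_ne one_ne_zero]
  refine ⟨⟨?_, ?_⟩, ?_, ?_⟩
  · linear_combination h10
  · linear_combination -h00
  · ring
  · ring

theorem exists_mulVec_eq_smul_of_commute {K : Type*} [Field K] {M N : Matrix (Fin 2) (Fin 2) K}
    (h : Commute M N) (hM : M 1 0 ≠ 0) {α : K} {v : Fin 2 → K} (hv : M *ᵥ v = α • v) :
    ∃ x : K, N *ᵥ v = x • v := by
  refine ⟨(M 1 0)⁻¹ * (N 1 0 * α + (M 1 0 * N 1 1 - N 1 0 * M 1 1)), ?_⟩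
  rw [mul_smul, eq_inv_smul_iff₀ hM, ← smul_mulVec, smul_eq_add_smul_one_of_commute h, add_mulVec,
    smul_mulVec, smul_mulVec, one_mulVec, hv, smul_smul, add_smul]

theorem mulVec_eq_smul_of_aeval_charpoly_eq_zero {R A : Type*} [CommRing R] [Nontrivial R]
    [CommRing A] [Algebra R A] {M : Matrix (Fin 2) (Fin 2) R} {α : A}
    (h : aeval α M.charpoly = 0) :
    M.map (algebraMap R A) *ᵥ ![α - algebraMap R A (M 1 1), algebraMap R A (M 1 0)] =
      α • ![α - algebraMap R A (M 1 1), algebraMap R A (M 1 0)] := by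
  rw [aeval_charpoly_fin_two, trace_fin_two, det_fin_two] at h
  simp only [map_add, map_sub, map_mul] at h
  rw [funext_iff, Fin.forall_fin_two]
  simp only [mulVec, dotProduct, map_apply, Fin.sum_univ_two, cons_val_zero, cons_val_one,
    Pi.smul_apply, smul_eq_mul]
  constructor
  · linear_combination -h
  · ring

theorem apply_one_zero_ne_zero_of_irrational {M : Matrix (Fin 2) (Fin 2) ℤ} {α : ℝ}
    (hα : Irrational α) (h : aeval α M.charpoly = 0) : M 1 0 ≠ 0 := by
  intro hM
  have hfactor : (α - M 0 0) * (α - M 1 1) = 0 := by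
    rw [aeval_charpoly_fin_two, trace_fin_two, det_fin_two, hM] at h
    push_cast [algebraMap_int_eq, eq_intCast] at h
    linear_combination h
  rcases mul_eq_zero.1 hfactor with h0 | h1
  · exact hα.ne_int _ (sub_eq_zero.1 h0)
  · exact hα.ne_int _ (sub_eq_zero.1 h1)

theorem linearIndependent_sub_intCast_of_irrational {α : ℝ} (hα : Irrational α) (d : ℤ) {c : ℤ}
    (hc : c ≠ 0) : LinearIndependent ℤ ![α - d, (c : ℝ)] := by
  rw [LinearIndependent.pair_iff]
  intro s t hst
  have hs : s = 0 := by
    by_contra hs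
    refine ((hα.sub_intCast d).intCast_mul hs).ne_int (-(t * c)) ?_
    push_cast
    simp only [zsmul_eq_mul] at hst
    linear_combination hst
  subst hs
  exact ⟨rfl, by simpa [hc] using hst⟩

theorem exists_injective_hom_units_centralizer {M : GL (Fin 2) ℤ} {α : ℝ} (hα : Irrational α)
    (hroot : aeval α (M : Matrix (Fin 2) (Fin 2) ℤ).charpoly = 0) :
    ∃ χ : Subgroup.centralizer {M} →* ℝˣ, Function.Injective χ ∧
      (∀ N, aeval (χ N : ℝ) ((N : GL (Fin 2) ℤ) : Matrix (Fin 2) (Fin 2) ℤ).charpoly = 0) ∧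
      (χ ⟨M, Subgroup.mem_centralizer_singleton_iff.2 rfl⟩ : ℝ) = α := by
  have hM : (M : Matrix (Fin 2) (Fin 2) ℤ) 1 0 ≠ 0 := apply_one_zero_ne_zero_of_irrational hα hroot
  obtain ⟨v, hv, hMv⟩ : ∃ v : Fin 2 → ℝ, LinearIndependent ℤ v ∧
      (M : Matrix (Fin 2) (Fin 2) ℤ).map (algebraMap ℤ ℝ) *ᵥ v = α • v :=
    ⟨_, linearIndependent_sub_intCast_of_irrational hα _ hM,
      mulVec_eq_smul_of_aeval_charpoly_eq_zero hroot⟩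
  have hv0 : v ≠ 0 := fun h ↦ hv.ne_zero 0 (congrFun h 0)
  obtain ⟨χ, hχ⟩ := exists_hom_units_of_common_eigenvector (Γ := Subgroup.centralizer {M}) hv0
    fun N hN ↦
      have hMN : Commute M N := (Subgroup.mem_centralizer_singleton_iff.1 hN).symm
      exists_mulVec_eq_smul_of_commute
        ((hMN.map (Units.coeHom _)).map (algebraMap ℤ ℝ).mapMatrix) (by simpa using hM) hMv
  have χ_injective : Function.Injective χ := fun N N' h ↦ Subtype.ext <| Units.ext <|
    map_mulVec_injective_of_linearIndependent hv (by simp only [hχ, h])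
  refine ⟨χ, χ_injective, fun N ↦ aeval_charpoly_eq_zero_of_mulVec_eq_smul hv0 (hχ N), ?_⟩
  exact smul_left_injective ℝ hv0 ((hχ _).symm.trans hMv)

theorem abs_trace_le_of_aeval_charpoly_eq_zero {K : Type*} [RCLike K] (N : GL (Fin 2) ℤ) {x : K}
    (hx : aeval x (N : Matrix (Fin 2) (Fin 2) ℤ).charpoly = 0) (h1 : 1 ≤ ‖x‖) :
    (|(N : Matrix (Fin 2) (Fin 2) ℤ).trace| : ℝ) ≤ ‖x‖ + 1 := by
  set t := (N : Matrix (Fin 2) (Fin 2) ℤ).trace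
  set δ := (N : Matrix (Fin 2) (Fin 2) ℤ).det
  have hδ : ‖(δ : K)‖ = 1 := by
    rcases Int.isUnit_iff.1 (isUnits_det_units N) with h | h <;> simp [δ, h]
  have hroot : (t : K) * x = x ^ 2 + δ := by
    rw [aeval_charpoly_fin_two] at hx
    simp only [algebraMap_int_eq, eq_intCast] at hx
    linear_combination -hx
  refine le_of_mul_le_mul_right ?_ (zero_lt_one.trans_le h1)
  calc |(t : ℝ)| * ‖x‖ = ‖x ^ 2 + δ‖ := by
        rw [← hroot, norm_mul, ← RCLike.ofReal_intCast (K := K), RCLike.norm_ofReal]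
    _ ≤ ‖x‖ ^ 2 + 1 := by
        rw [← norm_pow, ← hδ]
        exact norm_add_le _ _
    _ ≤ (‖x‖ + 1) * ‖x‖ := by linarith

theorem finite_setOf_norm_mem_Icc_aeval_charpoly_eq_zero (K : Type*) [RCLike K] (B : ℝ) :
    {x : K | ‖x‖ ∈ Set.Icc 1 B ∧
      ∃ N : GL (Fin 2) ℤ, aeval x (N : Matrix (Fin 2) (Fin 2) ℤ).charpoly = 0}.Finite := by
  let P : Set ℤ[X] := Set.image2 (fun t δ ↦ X ^ 2 - C t * X + C δ)
    (Set.Icc (-⌊B + 1⌋) ⌊B + 1⌋) {δ | IsUnit δ}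
  have finite_units : {δ : ℤ | IsUnit δ}.Finite := Set.finite_range ((↑) : ℤˣ → ℤ)
  have finite_P : P.Finite := (Set.finite_Icc _ _).image2 _ finite_units
  refine (finite_P.biUnion fun p _ ↦ p.rootSet_finite K).subset ?_
  rintro x ⟨⟨h1, hB⟩, N, hx⟩
  have htrace : |(N : Matrix (Fin 2) (Fin 2) ℤ).trace| ≤ ⌊B + 1⌋ := Int.le_floor.2 <| by
    push_cast
    linarith [abs_trace_le_of_aeval_charpoly_eq_zero N hx h1]
  have charpoly_mem : (N : Matrix (Fin 2) (Fin 2) ℤ).charpoly ∈ P :=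
    ⟨_, abs_le.1 htrace, _, isUnits_det_units N, (charpoly_fin_two _).symm⟩
  exact Set.mem_biUnion charpoly_mem ((mem_rootSet_of_ne (charpoly_monic _).ne_zero).2 hx)

end FinTwo

/-- Let `M ∈ GL₂(ℤ)` have a real eigenvalue `α ≠ ±1`, and let `Γ` be the centralizer
of `M` in `GL₂(ℤ)`. Then `Γ ≃ U × ℤ` for some finite group `U`. -/
theorem centralizer_GL2_iso_finite_prod_int
    (M : GL (Fin 2) ℤ)
    (α : ℝ) (hα1 : α ≠ 1) (hα2 : α ≠ -1)
    (hroot : Polynomial.aeval α (Matrix.charpoly (M : Matrix (Fin 2) (Fin 2) ℤ)) = 0) :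
    ∃ (U : Type) (_ : Group U) (_ : Finite U),
      Nonempty ((Subgroup.centralizer ({M} : Set (GL (Fin 2) ℤ))) ≃* U × Multiplicative ℤ) := by
  have hα : Irrational α := irrational_of_aeval_eq_zero_of_isUnit_coeff_zero
    (charpoly_monic _) (isUnit_coeff_zero_charpoly M) hroot hα1 hα2
  obtain ⟨χ, χ_injective, χ_root, χ_M⟩ := exists_injective_hom_units_centralizer hα hroot
  have norm_χ_M : ‖(χ ⟨M, Subgroup.mem_centralizer_singleton_iff.2 rfl⟩ : ℝ)‖ ≠ 1 := by
    rw [χ_M, Real.norm_eq_abs, Ne, abs_eq zero_le_one, not_or]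
    exact ⟨hα1, hα2⟩
  refine exists_finite_mulEquiv_prod_int_of_injective_units χ_injective (fun B ↦ ?_) ⟨_, norm_χ_M⟩
  have finite_eigenvalues := finite_setOf_norm_mem_Icc_aeval_charpoly_eq_zero ℝ B
  have val_χ_injective := Units.val_injective.comp χ_injective
  exact (finite_eigenvalues.preimage val_χ_injective.injOn).subset fun N hN ↦ ⟨hN, N, χ_root N⟩
end

section
/- Let M ∈ GL₂(ℤ) (a 2×2 integer matrix with determinant ±1) have a real eigenvalue α with α ≠ 1 and α ≠ -1, and let Γ be the centralizer of M in GL₂(ℤ). Then the cyclic subgroup M^ℤ = {M^k : k ∈ ℤ} generated by M has finite index in Γ; equivalently, since Γ is abelian, the quotient group Γ/M^ℤ is finite. -/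
/-!
`M` has distinct real eigenvalues `α` and `β` with `|αβ| = 1`, so every `N ∈ Γ` is diagonal in an
eigenbasis of `M`, and its two diagonal entries are characters of `Γ` whose product is
`det N = ±1`. Multiplying `N` by a power of `M` brings the first one into a fixed annulus
`1 ≤ |x| ≤ C`, which bounds the second one too; only finitely many integer matrices that are
diagonal in a given basis have bounded diagonal entries.
-/

open Matrix

section QuotientByZPowers

variable {G A : Type*} [Group G]
  [CommGroup A] [LinearOrder A] [IsOrderedMonoid A] [MulArchimedean A]

theorem finite_quotient_zpowers_of_finite_preimage_Icc (φ : G →* A) {m : G} (hm : φ m ≠ 1)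
    (hfin : ∀ c : A, (φ ⁻¹' Set.Icc 1 c).Finite) : Finite (G ⧸ Subgroup.zpowers m) := by
  wlog hlt : 1 < φ m generalizing m
  · have hlt_inv : 1 < φ m⁻¹ := by
      rw [map_inv, Left.one_lt_inv_iff]
      exact hm.lt_of_le (not_lt.1 hlt)
    rw [← Subgroup.zpowers_inv]
    exact this hlt_inv.ne' hlt_inv
  have : Finite (φ ⁻¹' Set.Icc 1 (φ m)) := hfin (φ m)
  refine Finite.of_surjective
    (fun g : φ ⁻¹' Set.Icc 1 (φ m) ↦ (g.1 : G ⧸ Subgroup.zpowers m)) fun q ↦ ?_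
  obtain ⟨g, rfl⟩ := QuotientGroup.mk_surjective q
  obtain ⟨k, hk, -⟩ := existsUnique_mul_zpow_mem_Ico hlt (φ g) 1
  have hmem : φ (g * m ^ k) ∈ Set.Icc 1 (φ m) := by
    rw [one_mul] at hk
    rw [map_mul, map_zpow]
    exact Set.Ico_subset_Icc_self hk
  exact ⟨⟨g * m ^ k, hmem⟩, QuotientGroup.mk_mul_of_mem g ⟨k, rfl⟩⟩

end QuotientByZPowers

section Diagonalization

variable {n R K : Type*} [Fintype n] [DecidableEq n]

theorem isDiag_of_commute_diagonal [CommRing R] [NoZeroDivisors R] {A : Matrix n n R} {d : n → R}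
    (hd : Function.Injective d) (h : Commute A (diagonal d)) : A.IsDiag := by
  intro i j hij
  have hentry : A i j * d j = d i * A i j := by
    simpa only [mul_diagonal, diagonal_mul] using congrFun₂ h.eq i j
  have hmul : (d i - d j) * A i j = 0 := by linear_combination -hentry
  exact (mul_eq_zero.1 hmul).resolve_left (sub_ne_zero.2 (hd.ne hij))

theorem exists_semiconjBy_diagonal [Field K] (A : Matrix n n K) {d : n → K}
    (hd : Function.Injective d) (hroot : ∀ i, A.charpoly.IsRoot (d i)) :
    ∃ P : GL n K, SemiconjBy (P : Matrix n n K) (diagonal d) A := by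
  have heig (i : n) : Module.End.HasEigenvalue (toLin' A) (d i) := by
    rw [Module.End.hasEigenvalue_iff_isRoot_charpoly, charpoly_toLin']
    exact hroot i
  choose v hv using fun i ↦ (heig i).exists_hasEigenvector
  have hunit : IsUnit (of v)ᵀ :=
    linearIndependent_cols_iff_isUnit.1 (Module.End.eigenvectors_linearIndependent' _ d hd v hv)
  refine ⟨hunit.unit, ?_⟩
  ext i j
  have hentry : (A *ᵥ v j) i = d j * v j i := congrFun (hv j).apply_eq_smul i
  rw [IsUnit.unit_spec, mul_diagonal, mul_comm]
  exact hentry.symm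

theorem det_eq_prod_of_semiconjBy_diagonal [CommRing R] {P : GL n R} {v : n → R}
    {A : Matrix n n R} (h : SemiconjBy (P : Matrix n n R) (diagonal v) A) :
    A.det = ∏ i, v i := by
  rw [← det_diagonal, ← det_units_conj P (diagonal v), h.eq, Units.mul_inv_cancel_right]

theorem eq_of_semiconjBy_diagonal [CommRing R] {P : GL n R} {v w : n → R} {A : Matrix n n R}
    (hv : SemiconjBy (P : Matrix n n R) (diagonal v) A)
    (hw : SemiconjBy (P : Matrix n n R) (diagonal w) A) : v = w :=
  diagonal_injective (P.isUnit.mul_left_cancel (hv.eq.trans hw.eq.symm))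

theorem exists_semiconjBy_diagonal_of_commute [CommRing R] [NoZeroDivisors R] {P : GL n R}
    {d : n → R} (hd : Function.Injective d) {A B : Matrix n n R}
    (hA : SemiconjBy (P : Matrix n n R) (diagonal d) A) (hBA : Commute B A) :
    ∃ v, SemiconjBy (P : Matrix n n R) (diagonal v) B := by
  let B' : Matrix n n R := (P⁻¹ : GL n R) * B * P
  have hB : SemiconjBy (P : Matrix n n R) B' B := by
    simp only [B', SemiconjBy, mul_assoc, Units.mul_inv_cancel_left]
  have hcomm : Commute B' (diagonal d) := by
    refine P.isUnit.mul_left_cancel ?_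
    calc (P : Matrix n n R) * (B' * diagonal d) = B * A * P := (hB.mul_right hA).eq
      _ = A * B * P := by rw [hBA.eq]
      _ = P * (diagonal d * B') := (hA.mul_right hB).eq.symm
  exact ⟨B'.diag, (isDiag_of_commute_diagonal hd hcomm).diagonal_diag.symm ▸ hB⟩

theorem exists_centralizer_hom_semiconjBy_diagonal [CommRing R] [Field K] (f : R →+* K)
    (M : GL n R) {d : n → K} (hd : Function.Injective d)
    (hroot : ∀ i, (f.mapMatrix (M : Matrix n n R)).charpoly.IsRoot (d i)) :
    ∃ (P : GL n K) (χ : Subgroup.centralizer ({M} : Set (GL n R)) →* (n → K)),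
      (∀ N, SemiconjBy (P : Matrix n n K) (diagonal (χ N))
        (f.mapMatrix (N.1 : Matrix n n R))) ∧
      ∀ hM : M ∈ Subgroup.centralizer {M}, χ ⟨M, hM⟩ = d := by
  obtain ⟨P, hP⟩ := exists_semiconjBy_diagonal _ hd hroot
  have hcomm (N : Subgroup.centralizer ({M} : Set (GL n R))) :
      Commute (f.mapMatrix (N.1 : Matrix n n R)) (f.mapMatrix (M : Matrix n n R)) :=
    (Commute.units_val (Subgroup.mem_centralizer_singleton_iff.1 N.2)).map f.mapMatrix
  choose χ hχ using fun N ↦ exists_semiconjBy_diagonal_of_commute hd hP (hcomm N)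
  refine ⟨P, ⟨⟨χ, ?map_one⟩, fun N L ↦ ?map_mul⟩, hχ,
    fun hM ↦ eq_of_semiconjBy_diagonal (hχ ⟨M, hM⟩) hP⟩
  case map_one =>
    refine eq_of_semiconjBy_diagonal (hχ 1) ?_
    rw [OneMemClass.coe_one, Units.val_one, map_one, Pi.one_def, diagonal_one]
    exact .one_right _
  case map_mul =>
    refine eq_of_semiconjBy_diagonal (hχ (N * L)) ?_
    rw [Subgroup.coe_mul, Units.val_mul, map_mul, Pi.mul_def, ← diagonal_mul_diagonal]
    exact (hχ N).mul_right (hχ L)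

end Diagonalization

section IntegerMatrices

variable {m n : Type*}

theorem finite_setOf_map_intCast_mem_of_isCompact [Finite m] [Finite n]
    {s : Set (Matrix m n ℝ)} (hs : IsCompact s) :
    {A : Matrix m n ℤ | A.map (Int.cast : ℤ → ℝ) ∈ s}.Finite := by
  have : DiscreteTopology (Matrix m n ℤ) := inferInstanceAs (DiscreteTopology (m → n → ℤ))
  exact (Int.isClosedEmbedding_coe_real.matrix_map.isCompact_preimage hs).finite_of_discrete

variable [Fintype n] [DecidableEq n]

theorem abs_det_map_intCast_eq_one (N : GL n ℤ) :
    |((Int.castRingHom ℝ).mapMatrix (N : Matrix n n ℤ)).det| = 1 := by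
  rw [← RingHom.map_det, eq_intCast, ← Int.cast_abs,
    Int.isUnit_iff_abs_eq.1 ((isUnit_iff_isUnit_det _).1 N.isUnit), Int.cast_one]

theorem finite_setOf_semiconjBy_diagonal_abs_le (P : GL n ℝ) (C : ℝ) :
    {N : GL n ℤ | ∃ v : n → ℝ, (∀ i, |v i| ≤ C) ∧
      SemiconjBy (P : Matrix n n ℝ) (diagonal v)
        ((Int.castRingHom ℝ).mapMatrix (N : Matrix n n ℤ))}.Finite := by
  let conj (v : n → ℝ) : Matrix n n ℝ := P * diagonal v * (P⁻¹ : GL n ℝ)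
  have conj_continuous : Continuous conj := by fun_prop
  have hcompact : IsCompact (conj '' Set.Icc (fun _ ↦ -C) fun _ ↦ C) :=
    isCompact_Icc.image conj_continuous
  refine ((finite_setOf_map_intCast_mem_of_isCompact hcompact).preimage
    Units.val_injective.injOn).subset ?_
  rintro N ⟨v, hvC, hv⟩
  refine ⟨v, ⟨fun i ↦ (abs_le.1 (hvC i)).1, fun i ↦ (abs_le.1 (hvC i)).2⟩, ?_⟩
  exact (Units.mul_inv_eq_iff_eq_mul P).2 hv.eq

end IntegerMatrices

section FinTwo

theorem exists_isRoot_charpoly_mul_eq_det {R : Type*} [CommRing R] [Nontrivial R]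
    {A : Matrix (Fin 2) (Fin 2) R} {α : R} (hα : A.charpoly.IsRoot α) :
    ∃ β, A.charpoly.IsRoot β ∧ α * β = A.det := by
  simp only [charpoly_fin_two, Polynomial.IsRoot.def, Polynomial.eval_add, Polynomial.eval_sub,
    Polynomial.eval_mul, Polynomial.eval_pow, Polynomial.eval_C, Polynomial.eval_X] at hα ⊢
  exact ⟨A.trace - α, by linear_combination hα, by linear_combination -hα⟩

theorem finite_setOf_abs_apply_zero_mem_Icc {Γ : Subgroup (GL (Fin 2) ℤ)} {P : GL (Fin 2) ℝ}
    {χ : Γ → Fin 2 → ℝ}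
    (hχ : ∀ N : Γ, SemiconjBy (P : Matrix (Fin 2) (Fin 2) ℝ) (diagonal (χ N))
      ((Int.castRingHom ℝ).mapMatrix (N.1 : Matrix (Fin 2) (Fin 2) ℤ))) (C : ℝ) :
    {N | |χ N 0| ∈ Set.Icc 1 C}.Finite := by
  refine ((finite_setOf_semiconjBy_diagonal_abs_le P C).preimage
    Subtype.val_injective.injOn).subset ?_
  rintro N ⟨hlow, hup⟩
  have hdet : |χ N 0| * |χ N 1| = 1 := by
    rw [← abs_mul, ← Fin.prod_univ_two, ← det_eq_prod_of_semiconjBy_diagonal (hχ N),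
      abs_det_map_intCast_eq_one]
  have hsecond : |χ N 1| ≤ 1 := hdet ▸ le_mul_of_one_le_left (abs_nonneg _) hlow
  exact ⟨χ N, Fin.forall_fin_two.2 ⟨hup, hsecond.trans (hlow.trans hup)⟩, hχ N⟩

end FinTwo

/-- Let `M ∈ GL₂(ℤ)` have a real eigenvalue `α ≠ ±1`, and let `Γ` be the centralizer
of `M` in `GL₂(ℤ)`. Then the cyclic subgroup generated by `M` has finite index in `Γ`,
i.e. the quotient `Γ / M^ℤ` is finite. -/
theorem centralizer_GL2_quotient_zpowers_finite
    (M : GL (Fin 2) ℤ)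
    (α : ℝ) (hα1 : α ≠ 1) (hα2 : α ≠ -1)
    (hroot : Polynomial.aeval α (Matrix.charpoly (M : Matrix (Fin 2) (Fin 2) ℤ)) = 0)
    (hM : M ∈ Subgroup.centralizer ({M} : Set (GL (Fin 2) ℤ))) :
    Finite ((Subgroup.centralizer ({M} : Set (GL (Fin 2) ℤ))) ⧸
      Subgroup.zpowers (⟨M, hM⟩ : Subgroup.centralizer ({M} : Set (GL (Fin 2) ℤ)))) := by
  have hα : ((Int.castRingHom ℝ).mapMatrix (M : Matrix (Fin 2) (Fin 2) ℤ)).charpoly.IsRoot α := by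
    rwa [RingHom.mapMatrix_apply, charpoly_map, Polynomial.IsRoot.def, Polynomial.eval_map]
  have habs : |α| ≠ 1 := fun h ↦ (eq_or_eq_neg_of_abs_eq h).elim hα1 hα2
  obtain ⟨β, hβ, hαβ⟩ := exists_isRoot_charpoly_mul_eq_det hα
  have hne : α ≠ β := by
    rintro rfl
    have hsq : |α| * |α| = 1 := by rw [← abs_mul, hαβ, abs_det_map_intCast_eq_one]
    exact habs ((mul_self_eq_one_iff.1 hsq).resolve_right (by linarith [abs_nonneg α]))
  have hinj : Function.Injective ![α, β] := injective_pair_iff_ne.2 hne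
  obtain ⟨P, χ, hχ, hχM⟩ := exists_centralizer_hom_semiconjBy_diagonal (Int.castRingHom ℝ) M hinj
    (Fin.forall_fin_two.2 ⟨hα, hβ⟩)
  let ψ := (nnnormHom.toMonoidHom.comp ((Pi.evalMonoidHom _ 0).comp χ)).toHomUnits
  have val_ψ (N) : ((ψ N : NNReal) : ℝ) = |χ N 0| := rfl
  have ψ_ne_one : ψ ⟨M, hM⟩ ≠ 1 := fun h ↦ habs <| by
    simpa only [h, hχM, Units.val_one, NNReal.coe_one, cons_val_zero, eq_comm] using val_ψ ⟨M, hM⟩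
  exact finite_quotient_zpowers_of_finite_preimage_Icc ψ ψ_ne_one fun c ↦
    (finite_setOf_abs_apply_zero_mem_Icc hχ c).subset fun N hN ↦ hN
end

section
/- Let r be a nonzero integer, and let H(r) be the group given by the presentation with generators g₁, g₂, g₃ and relations g₃g₁ = g₁g₃, g₃g₂ = g₂g₃, and g₁⁻¹g₂⁻¹g₁g₂ = g₃ʳ. Then the center Z(H(r)) of H(r) equals the subgroup generated by (the image of) g₃, and this subgroup is infinite cyclic, i.e., isomorphic to ℤ. -/
/-- The relations of the group `H(r)`: generators `g₁ = of 0`, `g₂ = of 1`, `g₃ = of 2`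
subject to `g₃g₁ = g₁g₃`, `g₃g₂ = g₂g₃` and `g₁⁻¹g₂⁻¹g₁g₂ = g₃ʳ`. -/
def InoueHeisenbergRels (r : ℤ) : Set (FreeGroup (Fin 3)) :=
  { FreeGroup.of 2 * FreeGroup.of 0 * (FreeGroup.of 0 * FreeGroup.of 2)⁻¹,
    FreeGroup.of 2 * FreeGroup.of 1 * (FreeGroup.of 1 * FreeGroup.of 2)⁻¹,
    (FreeGroup.of 0)⁻¹ * (FreeGroup.of 1)⁻¹ * FreeGroup.of 0 * FreeGroup.of 1 *
      ((FreeGroup.of 2) ^ r)⁻¹ }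

/-!
Let `N` be a central subgroup containing `⁅x, y⁆` such that `x`, `y` and `N` generate `G`. Then
`⁅x ^ a, y ^ b⁆ = ⁅x, y⁆ ^ (a * b)`, and every element of `G` has the form `x ^ a * y ^ b * s` with
`s ∈ N`. Such an element commutes with `y` iff `⁅x, y⁆ ^ a = 1` and with `x` iff `⁅x, y⁆ ^ b = 1`,
so the center is exactly `N` as soon as `⁅x, y⁆` has infinite order. For `H(r)`, the infinite order
of `g₃` is read off from an action on `ℤ × ℤ` in which `g₃` is a translation and `g₂` is a shear.
-/

open scoped commutatorElement

section TwoGenerators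

variable {G : Type*} [Group G] {x y : G}

lemma commutatorElement_zpow_left (hx : Commute ⁅x, y⁆ x) (m : ℤ) : ⁅x ^ m, y⁆ = ⁅x, y⁆ ^ m :=
  calc
    ⁅x ^ m, y⁆ = x ^ m * (y * x * y⁻¹) ^ (-m) := by
      rw [conj_zpow, commutatorElement_def]; group
    _ = x ^ m * (⁅x, y⁆⁻¹ * x) ^ (-m) := by
      rw [commutatorElement_def]; group
    _ = ⁅x, y⁆ ^ m := by
      rw [hx.inv_left.mul_zpow, inv_zpow', neg_neg, (hx.zpow_zpow _ _).eq, zpow_neg,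
        mul_inv_cancel_left]

lemma commutatorElement_zpow_right (hy : Commute ⁅x, y⁆ y) (n : ℤ) : ⁅x, y ^ n⁆ = ⁅x, y⁆ ^ n := by
  have hy' : Commute ⁅y, x⁆ y := by
    rw [← commutatorElement_inv]
    exact hy.inv_left
  rw [← commutatorElement_inv, commutatorElement_zpow_left hy', ← inv_zpow, commutatorElement_inv]

lemma commutatorElement_zpow_zpow (hx : Commute ⁅x, y⁆ x) (hy : Commute ⁅x, y⁆ y) (m n : ℤ) :
    ⁅x ^ m, y ^ n⁆ = ⁅x, y⁆ ^ (m * n) := by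
  have hm : ⁅x ^ m, y⁆ = ⁅x, y⁆ ^ m := commutatorElement_zpow_left hx m
  rw [commutatorElement_zpow_right (hm ▸ hy.zpow_left m), hm, zpow_mul]

lemma zpow_mul_zpow_eq_mul_commutatorElement_zpow
    (hx : Commute ⁅x, y⁆ x) (hy : Commute ⁅x, y⁆ y) (m n : ℤ) :
    y ^ n * x ^ m = x ^ m * y ^ n * ⁅x, y⁆ ^ (-(m * n)) := by
  have hxy : Commute (⁅x, y⁆ ^ (m * n)) (y ^ n * x ^ m) :=
    (hy.zpow_zpow _ _).mul_right (hx.zpow_zpow _ _)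
  rw [zpow_neg, eq_mul_inv_iff_mul_eq, ← hxy.eq, ← commutatorElement_zpow_zpow hx hy,
    commutatorElement_def]
  group

lemma exists_eq_zpow_mul_zpow_mul_commutatorElement_zpow
    (hx : Commute ⁅x, y⁆ x) (hy : Commute ⁅x, y⁆ y) {k : G} (hk : k ∈ Subgroup.closure {x, y}) :
    ∃ a b c : ℤ, k = x ^ a * y ^ b * ⁅x, y⁆ ^ c := by
  have mul_x (a b c n : ℤ) : x ^ a * y ^ b * ⁅x, y⁆ ^ c * x ^ n =
      x ^ (a + n) * y ^ b * ⁅x, y⁆ ^ (-(n * b) + c) :=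
    calc
      _ = x ^ a * (y ^ b * x ^ n) * ⁅x, y⁆ ^ c := by
        simp only [mul_assoc, (hx.zpow_zpow c n).eq]
      _ = _ := by
        rw [zpow_mul_zpow_eq_mul_commutatorElement_zpow hx hy]
        simp only [zpow_add, mul_assoc]
  have mul_y (a b c n : ℤ) : x ^ a * y ^ b * ⁅x, y⁆ ^ c * y ^ n =
      x ^ a * y ^ (b + n) * ⁅x, y⁆ ^ c := by
    simp only [zpow_add, mul_assoc, (hy.zpow_zpow c n).eq]
  induction hk using Subgroup.closure_induction_right with
  | one => exact ⟨0, 0, 0, by simp⟩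
  | mul_right k _ g hg ih =>
    obtain ⟨a, b, c, rfl⟩ := ih
    rcases hg with rfl | rfl
    · exact ⟨_, _, _, by simpa only [zpow_one] using mul_x a b c 1⟩
    · exact ⟨_, _, _, by simpa only [zpow_one] using mul_y a b c 1⟩
  | mul_inv_cancel k _ g hg ih =>
    obtain ⟨a, b, c, rfl⟩ := ih
    rcases hg with rfl | rfl
    · exact ⟨_, _, _, by simpa only [zpow_neg_one] using mul_x a b c (-1)⟩
    · exact ⟨_, _, _, by simpa only [zpow_neg_one] using mul_y a b c (-1)⟩

lemma eq_zero_of_commute_zpow_left (hx : Commute ⁅x, y⁆ x) (hinf : ¬IsOfFinOrder ⁅x, y⁆) {m : ℤ}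
    (hm : Commute (x ^ m) y) : m = 0 := by
  rw [← commutatorElement_eq_one_iff_commute, commutatorElement_zpow_left hx] at hm
  exact injective_zpow_iff_not_isOfFinOrder.mpr hinf (hm.trans (zpow_zero _).symm)

lemma eq_zero_of_commute_zpow_right (hy : Commute ⁅x, y⁆ y) (hinf : ¬IsOfFinOrder ⁅x, y⁆) {n : ℤ}
    (hn : Commute x (y ^ n)) : n = 0 := by
  rw [← commutatorElement_eq_one_iff_commute, commutatorElement_zpow_right hy] at hn
  exact injective_zpow_iff_not_isOfFinOrder.mpr hinf (hn.trans (zpow_zero _).symm)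

theorem center_eq_of_closure_pair_sup_eq_top {N : Subgroup G} (hN : N ≤ Subgroup.center G)
    (hgen : Subgroup.closure {x, y} ⊔ N = ⊤) (hxy : ⁅x, y⁆ ∈ N) (hinf : ¬IsOfFinOrder ⁅x, y⁆) :
    Subgroup.center G = N := by
  refine le_antisymm (fun g hg ↦ ?_) hN
  have hw (u : G) : Commute ⁅x, y⁆ u := (Subgroup.mem_center_iff.mp (hN hxy) u).symm
  have : N.Normal := ⟨fun n hn u ↦ by
    rwa [Subgroup.mem_center_iff.mp (hN hn) u, mul_inv_cancel_right]⟩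
  obtain ⟨k, hk, s, hs, rfl⟩ :=
    Subgroup.mem_sup_of_normal_right.mp (hgen ▸ Subgroup.mem_top g)
  obtain ⟨a, b, c, rfl⟩ := exists_eq_zpow_mul_zpow_mul_commutatorElement_zpow (hw x) (hw y) hk
  have hws : ⁅x, y⁆ ^ c * s ∈ N := mul_mem (zpow_mem hxy c) hs
  have hab (u : G) : Commute (x ^ a * y ^ b) u := by
    rw [mul_assoc, Subgroup.mul_mem_cancel_right _ (hN hws)] at hg
    exact (Subgroup.mem_center_iff.mp hg u).symm
  have ha : a = 0 := by
    refine eq_zero_of_commute_zpow_left (hw x) hinf ?_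
    simpa using (hab y).mul_left ((Commute.refl y).zpow_left (-b))
  have hb : b = 0 := by
    refine eq_zero_of_commute_zpow_right (hw y) hinf (Commute.symm ?_)
    simpa [ha] using hab x
  simpa [ha, hb] using hws

end TwoGenerators

lemma not_isOfFinOrder_zpow {G : Type*} [Group G] {z : G} (hz : ¬IsOfFinOrder z) {n : ℤ}
    (hn : n ≠ 0) : ¬IsOfFinOrder (z ^ n) := by
  simp_rw [isOfFinOrder_iff_zpow_eq_one, ← zpow_mul] at hz ⊢
  exact fun ⟨m, hm, h⟩ ↦ hz ⟨n * m, mul_ne_zero hn hm, h⟩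

lemma nonempty_zpowers_mulEquiv_int {G : Type*} [Group G] {z : G} (hz : ¬IsOfFinOrder z) :
    Nonempty (Subgroup.zpowers z ≃* Multiplicative ℤ) := by
  have := (infinite_zpowers.mpr hz).to_subtype
  exact ⟨intCyclicMulEquiv.symm⟩

/-- The group `H(r)`. -/
abbrev InoueHeisenberg (r : ℤ) : Type := PresentedGroup (InoueHeisenbergRels r)

namespace InoueHeisenberg

variable (r : ℤ)

/-- The generator `g₁` of `H(r)`. -/
abbrev g₁ : InoueHeisenberg r := PresentedGroup.of 0

/-- The generator `g₂` of `H(r)`. -/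
abbrev g₂ : InoueHeisenberg r := PresentedGroup.of 1

/-- The generator `g₃` of `H(r)`. -/
abbrev g₃ : InoueHeisenberg r := PresentedGroup.of 2

lemma commute_g₃_g₁ : Commute (g₃ r) (g₁ r) :=
  PresentedGroup.mk_eq_mk_of_mul_inv_mem (.inl rfl)

lemma commute_g₃_g₂ : Commute (g₃ r) (g₂ r) :=
  PresentedGroup.mk_eq_mk_of_mul_inv_mem (.inr (.inl rfl))

lemma inv_g₁_mul_inv_g₂_mul_g₁_mul_g₂ : (g₁ r)⁻¹ * (g₂ r)⁻¹ * g₁ r * g₂ r = g₃ r ^ r :=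
  PresentedGroup.mk_eq_mk_of_mul_inv_mem (.inr (.inr rfl))

lemma commutatorElement_g₁_g₂ : ⁅g₁ r, g₂ r⁆ = g₃ r ^ r := by
  have h : Commute (g₃ r ^ r) (g₂ r * g₁ r)⁻¹ :=
    (((commute_g₃_g₂ r).mul_right (commute_g₃_g₁ r)).zpow_left r).inv_right
  calc
    ⁅g₁ r, g₂ r⁆ = g₂ r * g₁ r * ((g₁ r)⁻¹ * (g₂ r)⁻¹ * g₁ r * g₂ r) * (g₂ r * g₁ r)⁻¹ := by
      rw [commutatorElement_def]; group
    _ = g₃ r ^ r := by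
      rw [inv_g₁_mul_inv_g₂_mul_g₁_mul_g₂, mul_assoc, h.eq, mul_inv_cancel_left]

lemma closure_g₁_g₂_sup_zpowers_g₃ :
    Subgroup.closure {g₁ r, g₂ r} ⊔ Subgroup.zpowers (g₃ r) = ⊤ := by
  refine eq_top_iff.mpr fun x _ ↦ PresentedGroup.generated_by _ _ (fun i ↦ ?_) x
  fin_cases i
  · exact Subgroup.mem_sup_left (Subgroup.subset_closure (.inl rfl))
  · exact Subgroup.mem_sup_left (Subgroup.subset_closure (.inr rfl))
  · exact Subgroup.mem_sup_right (Subgroup.mem_zpowers _)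

lemma g₃_mem_center : g₃ r ∈ Subgroup.center (InoueHeisenberg r) := by
  refine Subgroup.mem_center_iff.mpr fun x ↦ Subgroup.mem_centralizer_singleton_iff.mp
    (PresentedGroup.generated_by _ _ (fun i ↦ Subgroup.mem_centralizer_singleton_iff.mpr ?_) x)
  fin_cases i
  · exact (commute_g₃_g₁ r).eq.symm
  · exact (commute_g₃_g₂ r).eq.symm
  · rfl

/-- Permutations of `ℤ × ℤ` satisfying the relations of `H(r)`: the generators `g₁` and `g₃` act as
the translations by `(1, 0)` and `(0, 1)`, and `g₂` as the shear `(u, v) ↦ (u, v - r * u)`. -/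
def latticePerm : Fin 3 → Equiv.Perm (ℤ × ℤ) :=
  ![Equiv.addRight (1, 0),
    Equiv.prodShear (Equiv.refl ℤ) fun u ↦ Equiv.subRight (r * u),
    Equiv.addRight (0, 1)]

lemma lift_latticePerm_eq_one (w : FreeGroup (Fin 3)) (hw : w ∈ InoueHeisenbergRels r) :
    FreeGroup.lift (latticePerm r) w = 1 := by
  rcases hw with rfl | rfl | rfl
  all_goals
    simp only [map_mul, map_inv, map_zpow, FreeGroup.lift_apply_of, mul_inv_eq_one]
    ext p <;> simp [latticePerm, Equiv.Perm.inv_def] <;> ring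

/-- The action of `H(r)` on `ℤ × ℤ` given on generators by `latticePerm`. -/
def latticeAction : InoueHeisenberg r →* Equiv.Perm (ℤ × ℤ) :=
  PresentedGroup.toGroup (lift_latticePerm_eq_one r)

lemma latticeAction_g₃_zpow (n : ℤ) : latticeAction r (g₃ r ^ n) = Equiv.addRight (0, n) := by
  have hg₃ : latticeAction r (g₃ r) = Equiv.addRight (0, 1) :=
    PresentedGroup.toGroup.of (lift_latticePerm_eq_one r)
  rw [map_zpow, hg₃, Equiv.zsmul_addRight]
  simp

lemma not_isOfFinOrder_g₃ : ¬IsOfFinOrder (g₃ r) := by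
  refine injective_zpow_iff_not_isOfFinOrder.mp fun m n hmn ↦ ?_
  have h := congrArg (fun g ↦ latticeAction r g (0, 0)) hmn
  simpa [latticeAction_g₃_zpow] using h

end InoueHeisenberg

/-- For `r ≠ 0`, the center of `H(r)` is the subgroup generated by `g₃`, and this
subgroup is infinite cyclic, i.e. isomorphic to `ℤ`. -/
theorem center_InoueHeisenberg_eq_zpowers_g3 (r : ℤ) (hr : r ≠ 0) :
    Subgroup.center (PresentedGroup (InoueHeisenbergRels r)) =
      Subgroup.zpowers (PresentedGroup.of (2 : Fin 3)) ∧
    Nonempty ((Subgroup.zpowers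
        (PresentedGroup.of (2 : Fin 3) : PresentedGroup (InoueHeisenbergRels r)))
      ≃* Multiplicative ℤ) := by
  have hinf := InoueHeisenberg.not_isOfFinOrder_g₃ r
  have hcomm := InoueHeisenberg.commutatorElement_g₁_g₂ r
  constructor
  · refine center_eq_of_closure_pair_sup_eq_top ?_
      (InoueHeisenberg.closure_g₁_g₂_sup_zpowers_g₃ r) ?_ ?_
    · exact Subgroup.zpowers_le.mpr (InoueHeisenberg.g₃_mem_center r)
    · exact hcomm ▸ Subgroup.zpow_mem_zpowers _ r
    · exact hcomm ▸ not_isOfFinOrder_zpow hinf hr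
  · exact nonempty_zpowers_mulEquiv_int hinf
end
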